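/- arXiv:1609.01080 — 2 statements merged into one kernel-verified Lean document; each statement's English description precedes it below -/
import Mathlib

section
/- Let n ≥ 3, m ≥ 2, and x_1, …, x_m ∈ ℝ^n be pairwise distinct points. Then for every u ∈ C_c^∞(ℝ^n), ∫_{ℝ^n} |∇u|² dx ≥ ((n-2)²/m²) Σ_{1 ≤ i < j ≤ m} ∫_{ℝ^n} |(x - x_i)/|x - x_i|² - (x - x_j)/|x - x_j|²|² u(x)² dx. -/
open MeasureTheory Finset

/-!
The field `Vᵢ(x) = (x - xᵢ) / |x - xᵢ|²` of the pole `xᵢ` has divergence `(n - 2) |Vᵢ|²` in the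
sense of distributions: since `f ↦ ∫ f(x) |x|⁻²` is homogeneous of degree `2 - n` under dilations
of `f`, differentiating `∫ f(tx) |x|⁻² dx` at `t = 1` gives the weak formula, with no cut-off
around the pole. Testing it with `u²` and completing the square `∫ |∇u + c u ∑ Vᵢ|² ≥ 0` yields
`∫ |∇u|² ≥ c (n - 2) ∑ ∫ |u Vᵢ|² - c² ∫ |∑ u Vᵢ|²`. For `c = (n - 2) / m` the right-hand side is
`c² (m ∑ ∫ |u Vᵢ|² - ∫ |∑ u Vᵢ|²)`, which the parallelogram identity for `m` vectors turns into
`c² ∑_{i < j} ∫ |u Vᵢ - u Vⱼ|²`.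
-/

section PairSums

variable {ι : Type*} [Fintype ι] [LinearOrder ι]

lemma two_mul_sum_sum_ite_lt {R : Type*} [NonAssocSemiring R] {f : ι → ι → R}
    (hsymm : ∀ i j, f i j = f j i) (hdiag : ∀ i, f i i = 0) :
    2 * ∑ i, ∑ j, (if i < j then f i j else 0) = ∑ i, ∑ j, f i j := by
  have hswap : ∑ i, ∑ j, (if i < j then f i j else 0) = ∑ i, ∑ j, if j < i then f i j else 0 := by
    rw [sum_comm]
    simp only [hsymm]
  rw [two_mul]
  nth_rewrite 2 [hswap]
  simp only [← sum_add_distrib]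
  refine sum_congr rfl fun i _ => sum_congr rfl fun j _ => ?_
  rcases lt_trichotomy i j with h | rfl | h
  · simp [h, h.not_gt]
  · simp [hdiag]
  · simp [h, h.not_gt]

variable {E : Type*} [NormedAddCommGroup E] [InnerProductSpace ℝ E]

lemma sum_sum_ite_lt_norm_sub_sq (v : ι → E) :
    ∑ i, ∑ j, (if i < j then ‖v i - v j‖ ^ 2 else 0) =
      Fintype.card ι * ∑ i, ‖v i‖ ^ 2 - ‖∑ i, v i‖ ^ 2 := by
  have hall : ∑ i, ∑ j, ‖v i - v j‖ ^ 2 =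
      2 * (Fintype.card ι * ∑ i, ‖v i‖ ^ 2 - ‖∑ i, v i‖ ^ 2) := by
    rw [← real_inner_self_eq_norm_sq (∑ i, v i), sum_inner]
    simp only [inner_sum, norm_sub_sq_real, sum_add_distrib, sum_sub_distrib, ← mul_sum,
      sum_const, card_univ, nsmul_eq_mul]
    ring
  rw [← two_mul_sum_sum_ite_lt (fun i j => by rw [norm_sub_rev]) (by simp)] at hall
  linarith

lemma sum_sum_ite_lt_integral_norm_sub_sq {α : Type*} {_ : MeasurableSpace α} {μ : Measure α}
    {v : ι → α → E} (hv : ∀ i, MemLp (v i) 2 μ) :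
    ∑ i, ∑ j, (if i < j then ∫ x, ‖v i x - v j x‖ ^ 2 ∂μ else 0) =
      Fintype.card ι * ∑ i, ∫ x, ‖v i x‖ ^ 2 ∂μ - ∫ x, ‖∑ i, v i x‖ ^ 2 ∂μ := by
  have hsq (i) : Integrable (fun x => ‖v i x‖ ^ 2) μ := (hv i).integrable_norm_pow two_ne_zero
  have hsum : Integrable (fun x => ‖∑ i, v i x‖ ^ 2) μ :=
    (memLp_finsetSum univ fun i _ => hv i).integrable_norm_pow two_ne_zero
  have hpair (i j) : Integrable (fun x => if i < j then ‖v i x - v j x‖ ^ 2 else 0) μ := by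
    split_ifs
    · exact ((hv i).sub (hv j)).integrable_norm_pow two_ne_zero
    · exact integrable_zero _ _ _
  calc ∑ i, ∑ j, (if i < j then ∫ x, ‖v i x - v j x‖ ^ 2 ∂μ else 0)
      = ∑ i, ∑ j, ∫ x, (if i < j then ‖v i x - v j x‖ ^ 2 else 0) ∂μ := by
        refine sum_congr rfl fun i _ => sum_congr rfl fun j _ => ?_
        split_ifs <;> simp
    _ = ∫ x, ∑ i, ∑ j, (if i < j then ‖v i x - v j x‖ ^ 2 else 0) ∂μ := by
        rw [integral_finsetSum _ fun i _ => integrable_finsetSum _ fun j _ => hpair i j]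
        exact sum_congr rfl fun i _ => (integral_finsetSum _ fun j _ => hpair i j).symm
    _ = ∫ x, (Fintype.card ι * ∑ i, ‖v i x‖ ^ 2 - ‖∑ i, v i x‖ ^ 2) ∂μ := by
        simp only [fun x => sum_sum_ite_lt_norm_sub_sq fun i => v i x]
    _ = Fintype.card ι * ∑ i, ∫ x, ‖v i x‖ ^ 2 ∂μ - ∫ x, ‖∑ i, v i x‖ ^ 2 ∂μ := by
        rw [integral_sub ((integrable_finsetSum _ fun i _ => hsq i).const_mul _) hsum,
          integral_const_mul, integral_finsetSum _ fun i _ => hsq i]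

end PairSums

section DualPairing

variable {α E : Type*} {_ : MeasurableSpace α} {μ : Measure α}
  [NormedAddCommGroup E] [NormedSpace ℝ E] {φ : α → E →L[ℝ] ℝ} {v : α → E}

lemma integrable_apply_of_memLp_two (hφ : MemLp φ 2 μ) (hv : MemLp v 2 μ) :
    Integrable (fun x => φ x (v x)) μ :=
  memLp_one_iff_integrable.1 <| (ContinuousLinearMap.id ℝ (E →L[ℝ] ℝ)).memLp_of_bilin 1 hφ hv

lemma neg_two_mul_integral_apply_sub_le (hφ : MemLp φ 2 μ) (hv : MemLp v 2 μ) :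
    -(2 * ∫ x, φ x (v x) ∂μ) - ∫ x, ‖v x‖ ^ 2 ∂μ ≤ ∫ x, ‖φ x‖ ^ 2 ∂μ := by
  have hφv := integrable_apply_of_memLp_two hφ hv
  have hvsq : Integrable (fun x => ‖v x‖ ^ 2) μ := hv.integrable_norm_pow two_ne_zero
  rw [← integral_const_mul, ← integral_neg, ← integral_sub (hφv.const_mul 2).fun_neg hvsq]
  refine integral_mono ((hφv.const_mul 2).fun_neg.sub hvsq) (hφ.integrable_norm_pow two_ne_zero)
    fun x => ?_
  have hle : -(φ x (v x)) ≤ ‖φ x‖ * ‖v x‖ := (neg_le_abs _).trans ((φ x).le_opNorm (v x))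
  linarith [sq_nonneg (‖φ x‖ - ‖v x‖), sub_sq ‖φ x‖ ‖v x‖]

end DualPairing

section Euler

variable {E F : Type*} [NormedAddCommGroup E] [NormedSpace ℝ E] [FiniteDimensional ℝ E] {f : E → ℝ}

lemma exists_isCompact_norm_fderiv_smul_apply_le (hf : ContDiff ℝ 1 f) (hs : HasCompactSupport f) :
    ∃ K : Set E, IsCompact K ∧ ∃ C : ℝ, ∀ t ∈ Set.Icc (1 / 2 : ℝ) (3 / 2), ∀ x,
      ‖fderiv ℝ f (t • x) x‖ ≤ K.indicator (fun _ => C) x := by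
  obtain ⟨R, hR⟩ := hs.isCompact.isBounded.subset_closedBall 0
  have hK : IsCompact (Metric.closedBall (0 : E) (2 * R)) := isCompact_closedBall 0 (2 * R)
  have hcont : Continuous fun q : ℝ × E => fderiv ℝ f (q.1 • q.2) q.2 :=
    ((hf.continuous_fderiv one_ne_zero).comp continuous_smul).clm_apply continuous_snd
  obtain ⟨C, hC⟩ := (isCompact_Icc.prod hK).exists_bound_of_continuousOn
    (s := Set.Icc (1 / 2 : ℝ) (3 / 2) ×ˢ _) hcont.continuousOn
  refine ⟨_, hK, C, fun t ht x => ?_⟩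
  by_cases hx : x ∈ Metric.closedBall (0 : E) (2 * R)
  · rw [Set.indicator_of_mem hx]
    exact hC (t, x) ⟨ht, hx⟩
  · have htx : t • x ∉ tsupport f := fun hmem => hx <| by
      have hle : ‖t • x‖ ≤ R := mem_closedBall_zero_iff.1 (hR hmem)
      rw [norm_smul, Real.norm_of_nonneg (by linarith [ht.1])] at hle
      exact mem_closedBall_zero_iff.2 (by nlinarith [ht.1, norm_nonneg x])
    simp [fderiv_of_notMem_tsupport ℝ htx, hx]

variable [MeasurableSpace E] [BorelSpace E] [NormedAddCommGroup F] [NormedSpace ℝ F] {w : E → F}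

lemma hasDerivAt_integral_comp_smul_smul {μ : Measure E} (hf : ContDiff ℝ 1 f)
    (hs : HasCompactSupport f) (hw : LocallyIntegrable w μ) :
    HasDerivAt (fun t : ℝ => ∫ x, f (t • x) • w x ∂μ) (∫ x, fderiv ℝ f x x • w x ∂μ) 1 := by
  obtain ⟨K, hK, C, hC⟩ := exists_isCompact_norm_fderiv_smul_apply_le hf hs
  have hmeas (t : ℝ) : AEStronglyMeasurable (fun x => f (t • x) • w x) μ :=
    (hf.continuous.comp (continuous_const_smul t)).aestronglyMeasurable.smul hw.aestronglyMeasurable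
  have hint : Integrable (fun x => f x • w x) μ :=
    hw.integrable_smul_left_of_hasCompactSupport hf.continuous hs
  have hmeas' : AEStronglyMeasurable (fun x => fderiv ℝ f x x • w x) μ :=
    ((hf.continuous_fderiv one_ne_zero).clm_apply continuous_id).aestronglyMeasurable.smul
      hw.aestronglyMeasurable
  have hbound : Integrable (K.indicator fun x => C * ‖w x‖) μ :=
    (integrable_indicator_iff hK.measurableSet).2 ((hw.integrableOn_isCompact hK).norm.const_mul C)
  have hderiv (x : E) (t : ℝ) :
      HasDerivAt (fun t : ℝ => f (t • x) • w x) (fderiv ℝ f (t • x) x • w x) t := by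
    have hline : HasDerivAt (fun t : ℝ => t • x) x t := by
      simpa using (hasDerivAt_id t).smul_const x
    exact ((hf.differentiable one_ne_zero (t • x)).hasFDerivAt.comp_hasDerivAt t hline).smul_const _
  have hle (x : E) (t : ℝ) (ht : t ∈ Set.Icc (1 / 2 : ℝ) (3 / 2)) :
      ‖fderiv ℝ f (t • x) x • w x‖ ≤ K.indicator (fun x => C * ‖w x‖) x := by
    rw [norm_smul, Set.indicator_mul_left]
    exact mul_le_mul_of_nonneg_right (hC t ht x) (norm_nonneg _)
  have key := hasDerivAt_integral_of_dominated_loc_of_deriv_le (x₀ := (1 : ℝ))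
    (F := fun t x => f (t • x) • w x) (F' := fun t x => fderiv ℝ f (t • x) x • w x)
    (Icc_mem_nhds (by norm_num) (by norm_num)) (.of_forall hmeas) (by simpa only [one_smul])
    (by simpa only [one_smul]) (.of_forall hle) hbound (.of_forall fun x t _ => hderiv x t)
  simpa only [one_smul] using key.2

lemma integral_fderiv_apply_self_smul_of_homogeneous {μ : Measure E} [μ.IsAddHaarMeasure]
    (hf : ContDiff ℝ 1 f) (hs : HasCompactSupport f) (hw : LocallyIntegrable w μ) {a : ℝ}
    (hom : ∀ t : ℝ, 0 < t → ∀ x, w (t • x) = t ^ a • w x) :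
    ∫ x, fderiv ℝ f x x • w x ∂μ = -(Module.finrank ℝ E + a) • ∫ x, f x • w x ∂μ := by
  have hscale : ∀ t : ℝ, 0 < t → ∫ x, f (t • x) • w x ∂μ =
      t ^ (-(Module.finrank ℝ E + a)) • ∫ x, f x • w x ∂μ := by
    intro t ht
    have hw' (x) : f (t • x) • w x = t ^ (-a) • (f (t • x) • w (t • x)) := by
      rw [hom t ht, smul_comm, smul_smul _ (t ^ a), ← Real.rpow_add ht]
      simp
    simp only [hw', integral_smul]
    rw [Measure.integral_comp_smul_of_nonneg μ (fun x => f x • w x) t (hR := ht.le), smul_smul,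
      ← Real.rpow_natCast, ← Real.rpow_neg ht.le, ← Real.rpow_add ht]
    ring_nf
  have hpow : HasDerivAt
      (fun t : ℝ => t ^ (-(Module.finrank ℝ E + a)) • ∫ x, f x • w x ∂μ)
      (-(Module.finrank ℝ E + a) • ∫ x, f x • w x ∂μ) 1 := by
    simpa using (Real.hasDerivAt_rpow_const (p := -(Module.finrank ℝ E + a))
      (.inl one_ne_zero)).smul_const (∫ x, f x • w x ∂μ)
  refine (hasDerivAt_integral_comp_smul_smul hf hs hw).unique (hpow.congr_of_eventuallyEq ?_)
  filter_upwards [lt_mem_nhds one_pos] with t ht using hscale t ht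

lemma locallyIntegrable_norm_rpow [Nontrivial E] (μ : Measure E) [μ.IsAddHaarMeasure] {a : ℝ}
    (ha : -Module.finrank ℝ E < a) : LocallyIntegrable (fun x => ‖x‖ ^ a) μ := by
  intro x
  refine ⟨Metric.ball 0 (‖x‖ + 1), Metric.isOpen_ball.mem_nhds (by simp), ?_⟩
  rw [integrableOn_fun_norm_addHaar μ (f := fun r => r ^ a)]
  refine ((intervalIntegral.integrableOn_Ioo_rpow_iff (s := Module.finrank ℝ E - 1 + a)
    (by positivity)).2 (by linarith)).congr_fun (fun r hr => ?_) measurableSet_Ioo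
  simp only [smul_eq_mul, Real.rpow_add hr.1, ← Real.rpow_natCast,
    Nat.cast_pred Module.finrank_pos]

end Euler

section PoleField

variable {E : Type*} [NormedAddCommGroup E] [InnerProductSpace ℝ E]

/-- The vector field `(x - p) / |x - p|²` of a pole `p`, that is, the gradient of `log |x - p|`.
At the pole itself its value is `0`. -/
noncomputable def poleField (p x : E) : E := (‖x - p‖ ^ 2)⁻¹ • (x - p)

lemma norm_poleField_sq (p x : E) : ‖poleField p x‖ ^ 2 = (‖x - p‖ ^ 2)⁻¹ := by
  rw [poleField, norm_smul, norm_inv, norm_pow, norm_norm]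
  rcases eq_or_ne ‖x - p‖ 0 with h | h
  · simp [h]
  · field_simp

variable [FiniteDimensional ℝ E] [MeasurableSpace E] [BorelSpace E] {μ : Measure E}
  [μ.IsAddHaarMeasure]

lemma locallyIntegrable_norm_poleField_sq (hE : 3 ≤ Module.finrank ℝ E) (p : E) :
    LocallyIntegrable (fun x => ‖poleField p x‖ ^ 2) μ := by
  have : Nontrivial E := Module.nontrivial_of_finrank_pos (R := ℝ) (by lia)
  have hE' : (3 : ℝ) ≤ Module.finrank ℝ E := by exact_mod_cast hE
  have h := locallyIntegrable_norm_rpow μ (a := -2) (by linarith)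
  rw [← map_sub_right_eq_self μ p, ← Homeomorph.coe_subRight,
    locallyIntegrable_map_homeomorph] at h
  simpa [norm_poleField_sq, Function.comp_def, Real.rpow_neg] using h

lemma integral_fderiv_poleField (hE : 3 ≤ Module.finrank ℝ E) (p : E) {f : E → ℝ}
    (hf : ContDiff ℝ 1 f) (hs : HasCompactSupport f) :
    ∫ x, fderiv ℝ f x (poleField p x) ∂μ =
      -(Module.finrank ℝ E - 2) * ∫ x, f x * ‖poleField p x‖ ^ 2 ∂μ := by
  have hw : LocallyIntegrable (fun x : E => (‖x‖ ^ 2)⁻¹) μ := by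
    simpa [norm_poleField_sq] using locallyIntegrable_norm_poleField_sq (μ := μ) hE 0
  have hom : ∀ t : ℝ, 0 < t → ∀ x : E, (‖t • x‖ ^ 2)⁻¹ = t ^ (-2 : ℝ) • (‖x‖ ^ 2)⁻¹ := by
    intro t ht x
    rw [norm_smul, mul_pow, mul_inv, Real.norm_of_nonneg ht.le, Real.rpow_neg ht.le,
      Real.rpow_two, smul_eq_mul]
  have h := integral_fderiv_apply_self_smul_of_homogeneous (f := fun x => f (x + p))
    (by fun_prop) (hs.comp_homeomorph (Homeomorph.addRight p)) hw hom
  rw [← integral_sub_right_eq_self _ p,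
    ← integral_sub_right_eq_self (fun x => f (x + p) • _) p] at h
  simp only [norm_poleField_sq]
  simpa only [poleField, map_smul, smul_eq_mul, fderiv_comp_add_right, sub_add_cancel, mul_comm,
    sub_eq_add_neg (Module.finrank ℝ E : ℝ)] using h

lemma memLp_two_smul_poleField (hE : 3 ≤ Module.finrank ℝ E) (p : E) {f : E → ℝ}
    (hf : Continuous f) (hs : HasCompactSupport f) :
    MemLp (fun x => f x • poleField p x) 2 μ := by
  have hmeas : Measurable fun x => f x • poleField p x := by
    have := hf.measurable
    unfold poleField
    fun_prop
  rw [memLp_two_iff_integrable_sq_norm hmeas.aestronglyMeasurable]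
  have hs2 : HasCompactSupport fun x => f x ^ 2 := hs.comp_left (g := (· ^ 2)) (by simp)
  have hloc : LocallyIntegrable (fun x => ‖poleField p x‖ ^ 2) μ :=
    locallyIntegrable_norm_poleField_sq hE p
  simpa [norm_smul, mul_pow] using
    hloc.integrable_smul_left_of_hasCompactSupport (hf.pow 2) hs2

lemma two_mul_integral_fderiv_smul_poleField (hE : 3 ≤ Module.finrank ℝ E) (p : E) {u : E → ℝ}
    (hu : ContDiff ℝ 1 u) (hs : HasCompactSupport u) :
    2 * ∫ x, fderiv ℝ u x (u x • poleField p x) ∂μ =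
      -(Module.finrank ℝ E - 2) * ∫ x, ‖u x • poleField p x‖ ^ 2 ∂μ := by
  have hs2 : HasCompactSupport fun x => u x ^ 2 := hs.comp_left (g := (· ^ 2)) (by simp)
  have hchain (x v : E) : fderiv ℝ (fun x => u x ^ 2) x v = 2 * fderiv ℝ u x (u x • v) := by
    rw [((hu.differentiable one_ne_zero x).hasFDerivAt.pow 2).fderiv]
    simp [mul_assoc]
  simpa only [hchain, integral_const_mul, norm_smul, mul_pow, Real.norm_eq_abs, sq_abs] using
    integral_fderiv_poleField (μ := μ) hE p (hu.pow 2) hs2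

theorem multipolar_hardy_parallelogram_general {ι : Type*} [Fintype ι] [LinearOrder ι] [Nonempty ι]
    (hE : 3 ≤ Module.finrank ℝ E) (p : ι → E) {u : E → ℝ} (hu : ContDiff ℝ 1 u)
    (hs : HasCompactSupport u) :
    ((Module.finrank ℝ E : ℝ) - 2) ^ 2 / Fintype.card ι ^ 2 *
        ∑ i, ∑ j, (if i < j then
          ∫ x, ‖poleField (p i) x - poleField (p j) x‖ ^ 2 * u x ^ 2 ∂μ else 0) ≤
      ∫ x, ‖fderiv ℝ u x‖ ^ 2 ∂μ := by
  set c : ℝ := (Module.finrank ℝ E - 2) / Fintype.card ι with hc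
  set v : ι → E → E := fun i x => u x • poleField (p i) x with hv
  have hv2 (i) : MemLp (v i) 2 μ := memLp_two_smul_poleField hE (p i) hu.continuous hs
  have hsum : MemLp (fun x => ∑ i, v i x) 2 μ := memLp_finsetSum univ fun i _ => hv2 i
  have hDu : MemLp (fderiv ℝ u) 2 μ :=
    (hu.continuous_fderiv one_ne_zero).memLp_of_hasCompactSupport (hs.fderiv (𝕜 := ℝ))
  have hpair (i j x) :
      ‖poleField (p i) x - poleField (p j) x‖ ^ 2 * u x ^ 2 = ‖v i x - v j x‖ ^ 2 := by
    rw [hv, ← smul_sub, norm_smul, mul_pow, Real.norm_eq_abs, sq_abs, mul_comm]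
  have hcross : 2 * ∫ x, fderiv ℝ u x (∑ i, v i x) ∂μ =
      -(c * Fintype.card ι) * ∑ i, ∫ x, ‖v i x‖ ^ 2 ∂μ := by
    simp only [map_sum]
    rw [integral_finsetSum _ fun i _ => integrable_apply_of_memLp_two hDu (hv2 i), mul_sum, mul_sum]
    refine sum_congr rfl fun i _ => ?_
    rw [two_mul_integral_fderiv_smul_poleField hE (p i) hu hs, hc, div_mul_cancel₀ _ (by simp)]
  calc _ = c ^ 2 * (Fintype.card ι * ∑ i, ∫ x, ‖v i x‖ ^ 2 ∂μ - ∫ x, ‖∑ i, v i x‖ ^ 2 ∂μ) := by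
        simp only [hpair, sum_sum_ite_lt_integral_norm_sub_sq hv2, hc, div_pow]
    _ = -(2 * ∫ x, fderiv ℝ u x (c • ∑ i, v i x) ∂μ) - ∫ x, ‖c • ∑ i, v i x‖ ^ 2 ∂μ := by
        simp only [map_smul, smul_eq_mul, norm_smul, mul_pow, Real.norm_eq_abs, sq_abs,
          integral_const_mul]
        linear_combination c * hcross
    _ ≤ ∫ x, ‖fderiv ℝ u x‖ ^ 2 ∂μ := neg_two_mul_integral_apply_sub_le hDu (hsum.const_smul c)

end PoleField

theorem multipolar_hardy_parallelogram (n m : ℕ) (hn : 3 ≤ n) (hm : 2 ≤ m)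
    (p : Fin m → EuclideanSpace ℝ (Fin n)) (hp : Function.Injective p)
    (u : EuclideanSpace ℝ (Fin n) → ℝ)
    (hu : ContDiff ℝ (⊤ : ℕ∞) u) (hsupp : HasCompactSupport u) :
    ∫ x, ‖gradient u x‖ ^ 2 ≥
      ((n : ℝ) - 2) ^ 2 / m ^ 2 *
        ∑ i : Fin m, ∑ j : Fin m, if i < j then
          ∫ x, ‖(‖x - p i‖ ^ 2)⁻¹ • (x - p i) - (‖x - p j‖ ^ 2)⁻¹ • (x - p j)‖ ^ 2
            * u x ^ 2 else 0 := by
  have : Nonempty (Fin m) := ⟨⟨0, by lia⟩⟩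
  simpa [poleField, gradient] using multipolar_hardy_parallelogram_general (μ := volume)
    (by simpa using hn) p (hu.of_le (by exact_mod_cast le_top)) hsupp
end

section
/- Let n ≥ 3, m ≥ 2, and x_1, …, x_m ∈ ℝ^n be pairwise distinct. Then for every u ∈ C_c^∞(ℝ^n), ∫_{ℝ^n} |∇u|² dx ≥ ((n-2)²/m²) Σ_{1 ≤ i < j ≤ m} ∫_{ℝ^n} (|x_i − x_j|² / (|x − x_i|² |x − x_j|²)) u(x)² dx. -/
open MeasureTheory Finset

/-!
For a `C¹` vector field `V`, integrating `0 ≤ ‖∇u + u V‖²` and moving the derivative off `u²` by the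
divergence theorem gives `∫ (div V - ‖V‖²) u² ≤ ∫ ‖∇u‖²`. Take
`V = (n - 2) / m * ∑ i, (x - p i) / ‖x - p i‖²`: each summand `F i` has divergence
`(n - 2) ‖F i‖²`, so by the parallelogram identity
`m * ∑ i, ‖F i‖² - ‖∑ i, F i‖² = ∑ i < j, ‖F i - F j‖²`, and since inversion distorts distances by
`‖F i - F j‖² = ‖p i - p j‖² / (‖x - p i‖² ‖x - p j‖²)`, this is the multipolar inequality.
To make `V` smooth, replace the denominators by `‖x - p i‖² + ε`, for which `div F i` is still at
least `(n - 2) ‖F i‖²`; Fatou's lemma recovers the singular potential as `ε → 0`.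
-/

open Filter Topology Module Measure

section Sums

variable {ι : Type*} [Fintype ι]

theorem sum_sum_eq_two_nsmul_sum_sum_lt [LinearOrder ι] {M : Type*} [AddCommMonoid M]
    {f : ι → ι → M} (hsymm : ∀ i j, f i j = f j i) (hdiag : ∀ i, f i i = 0) :
    ∑ i, ∑ j, f i j = 2 • ∑ i, ∑ j, if i < j then f i j else 0 := by
  have hsplit (i j : ι) :
      f i j = (if i < j then f i j else 0) + if j < i then f j i else 0 := by
    rcases lt_trichotomy i j with h | rfl | h
    · simp [h, h.not_gt]
    · simp [hdiag]
    · simp [h, h.not_gt, hsymm i j]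
  calc ∑ i, ∑ j, f i j
      = ∑ i, ∑ j, ((if i < j then f i j else 0) + if j < i then f j i else 0) := by
        simp only [← hsplit]
    _ = 2 • ∑ i, ∑ j, if i < j then f i j else 0 := by
        simp only [sum_add_distrib, two_nsmul]
        rw [sum_comm (f := fun i j ↦ if j < i then f j i else 0)]

theorem sum_sum_norm_sub_sq {E : Type*} [NormedAddCommGroup E] [InnerProductSpace ℝ E]
    (a : ι → E) :
    ∑ i, ∑ j, ‖a i - a j‖ ^ 2 = 2 * (Fintype.card ι * ∑ i, ‖a i‖ ^ 2 - ‖∑ i, a i‖ ^ 2) := by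
  have hcross : ∑ i, ∑ j, inner ℝ (a i) (a j) = ‖∑ i, a i‖ ^ 2 := by
    rw [← real_inner_self_eq_norm_sq, sum_inner]
    simp only [inner_sum]
  simp only [norm_sub_sq_real, sum_add_distrib, sum_sub_distrib, ← mul_sum, hcross, sum_const,
    card_univ, nsmul_eq_mul]
  ring

end Sums

theorem integrable_and_integral_le_of_tendsto_ae {α : Type*} [MeasurableSpace α] {μ : Measure α}
    {f : ℕ → α → ℝ} {g : α → ℝ} {C : ℝ} (hf : ∀ k, Integrable (f k) μ) (hf₀ : ∀ k, 0 ≤ᵐ[μ] f k)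
    (hfC : ∀ k, ∫ x, f k x ∂μ ≤ C) (hfg : ∀ᵐ x ∂μ, Tendsto (f · x) atTop (𝓝 (g x))) :
    Integrable g μ ∧ ∫ x, g x ∂μ ≤ C := by
  have hg₀ : 0 ≤ᵐ[μ] g := by
    filter_upwards [hfg, ae_all_iff.2 hf₀] with x hx hx₀ using ge_of_tendsto' hx hx₀
  have hg_meas : AEStronglyMeasurable g μ :=
    aestronglyMeasurable_of_tendsto_ae atTop (fun k ↦ (hf k).1) hfg
  have hfatou : ∫⁻ x, ENNReal.ofReal (g x) ∂μ ≤ ENNReal.ofReal C := by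
    calc ∫⁻ x, ENNReal.ofReal (g x) ∂μ
        = ∫⁻ x, liminf (fun k ↦ ENNReal.ofReal (f k x)) atTop ∂μ :=
          lintegral_congr_ae <| hfg.mono fun x hx ↦ (ENNReal.tendsto_ofReal hx).liminf_eq.symm
      _ ≤ liminf (fun k ↦ ∫⁻ x, ENNReal.ofReal (f k x) ∂μ) atTop :=
          lintegral_liminf_le' fun k ↦ (hf k).1.aemeasurable.ennreal_ofReal
      _ ≤ liminf (fun _ ↦ ENNReal.ofReal C) atTop := liminf_le_liminf <| .of_forall fun k ↦ by
          rw [← ofReal_integral_eq_lintegral_ofReal (hf k) (hf₀ k)]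
          exact ENNReal.ofReal_le_ofReal (hfC k)
      _ = ENNReal.ofReal C := liminf_const _
  have hg : Integrable g μ :=
    ⟨hg_meas, (hasFiniteIntegral_iff_ofReal hg₀).2 (hfatou.trans_lt ENNReal.ofReal_lt_top)⟩
  have hC : 0 ≤ C := (integral_nonneg_of_ae (hf₀ 0)).trans (hfC 0)
  rw [← ofReal_integral_eq_lintegral_ofReal hg hg₀] at hfatou
  exact ⟨hg, (ENNReal.ofReal_le_ofReal_iff hC).1 hfatou⟩

theorem hasCompactSupport_fun_pow {α R : Type*} [TopologicalSpace α] [MonoidWithZero R]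
    {f : α → R} (hf : HasCompactSupport f) {n : ℕ} (hn : n ≠ 0) :
    HasCompactSupport fun x ↦ f x ^ n :=
  hf.comp_left (g := (· ^ n)) (zero_pow hn)

section Divergence

variable {E : Type*} [NormedAddCommGroup E] [NormedSpace ℝ E]

/-- The divergence of a vector field on a normed space, as the trace of its derivative; no basis
or inner product is involved. It is meaningful where the field is differentiable. -/
noncomputable def divergence (V : E → E) (x : E) : ℝ :=
  LinearMap.trace ℝ E (fderiv ℝ V x)

theorem divergence_sum {ι : Type*} {s : Finset ι} {V : ι → E → E} {x : E}
    (hV : ∀ i ∈ s, DifferentiableAt ℝ (V i) x) :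
    divergence (fun y ↦ ∑ i ∈ s, V i y) x = ∑ i ∈ s, divergence (V i) x := by
  simp [divergence, fderiv_fun_sum hV]

theorem divergence_const_smul (c : ℝ) (V : E → E) (x : E) :
    divergence (fun y ↦ c • V y) x = c * divergence V x := by
  have hfderiv : fderiv ℝ (fun y ↦ c • V y) x = c • fderiv ℝ V x :=
    congrFun (fderiv_const_smul_field c) x
  simp [divergence, hfderiv]

variable [FiniteDimensional ℝ E]

theorem divergence_smul {f : E → ℝ} {V : E → E} {x : E} (hf : DifferentiableAt ℝ f x)
    (hV : DifferentiableAt ℝ V x) :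
    divergence (fun y ↦ f y • V y) x = f x * divergence V x + fderiv ℝ f x (V x) := by
  simp [divergence, fderiv_fun_smul hf hV, LinearMap.trace_smulRight]

theorem divergence_sub_norm_sq_mul_sq_le {u : E → ℝ} {V : E → E} {x : E}
    (hu : DifferentiableAt ℝ u x) (hV : DifferentiableAt ℝ V x) :
    (divergence V x - ‖V x‖ ^ 2) * u x ^ 2 ≤
      ‖fderiv ℝ u x‖ ^ 2 + divergence (fun y ↦ u y ^ 2 • V y) x := by
  have hproduct : divergence (fun y ↦ u y ^ 2 • V y) x =
      u x ^ 2 * divergence V x + 2 * (u x * fderiv ℝ u x (V x)) := by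
    rw [divergence_smul (f := fun y ↦ u y ^ 2) (hu.pow 2) hV, fderiv_fun_pow 2 hu]
    simp [mul_assoc]
  have hcross : |u x * fderiv ℝ u x (V x)| ≤ ‖fderiv ℝ u x‖ * (|u x| * ‖V x‖) := by
    rw [abs_mul, mul_left_comm]
    gcongr
    exact (fderiv ℝ u x).le_opNorm (V x)
  have hyoung := two_mul_le_add_sq ‖fderiv ℝ u x‖ (|u x| * ‖V x‖)
  rw [mul_pow, sq_abs] at hyoung
  linarith [neg_abs_le (u x * fderiv ℝ u x (V x))]

/-- The trace as a continuous linear functional on endomorphisms of a finite-dimensional space, so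
that it commutes with integrals. -/
noncomputable def traceCLM : (E →L[ℝ] E) →L[ℝ] ℝ :=
  LinearMap.toContinuousLinearMap (LinearMap.trace ℝ E ∘ₗ ContinuousLinearMap.coeLM ℝ)

theorem continuous_divergence {V : E → E} (hV : ContDiff ℝ 1 V) : Continuous (divergence V) :=
  traceCLM.continuous.comp (hV.continuous_fderiv one_ne_zero)

theorem integrable_divergence_sub_norm_sq_mul_sq [MeasurableSpace E] [BorelSpace E]
    {μ : Measure E} [IsFiniteMeasureOnCompacts μ] {u : E → ℝ} {V : E → E} (hu : Continuous u)
    (hs : HasCompactSupport u) (hV : ContDiff ℝ 1 V) :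
    Integrable (fun x ↦ (divergence V x - ‖V x‖ ^ 2) * u x ^ 2) μ := by
  have hs₂ : HasCompactSupport fun x ↦ u x ^ 2 := hasCompactSupport_fun_pow hs two_ne_zero
  have hdiv := continuous_divergence hV
  exact Continuous.integrable_of_hasCompactSupport (by fun_prop) hs₂.mul_left

variable [MeasurableSpace E] [BorelSpace E] {μ : Measure E} [IsAddHaarMeasure μ]

theorem integral_fderiv_eq_zero {F : Type*} [NormedAddCommGroup F] [NormedSpace ℝ F]
    {f : E → F} (hf : ContDiff ℝ 1 f) (hs : HasCompactSupport f) :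
    ∫ x, fderiv ℝ f x ∂μ = 0 := by
  have hint : Integrable (fderiv ℝ f) μ :=
    (hf.continuous_fderiv one_ne_zero).integrable_of_hasCompactSupport (hs.fderiv ℝ)
  ext v
  rw [ContinuousLinearMap.integral_apply hint]
  simpa using integral_smul_fderiv_eq_neg_fderiv_smul_of_integrable (𝕜 := ℝ) (μ := μ)
    (f := fun _ ↦ 1) (g := f) (v := v) (by simp) (by simpa using hint.apply_continuousLinearMap v)
    (by simpa using hf.continuous.integrable_of_hasCompactSupport hs) (by simp)
    fun x _ ↦ hf.differentiable one_ne_zero x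

theorem integral_divergence_eq_zero {V : E → E} (hV : ContDiff ℝ 1 V)
    (hs : HasCompactSupport V) : ∫ x, divergence V x ∂μ = 0 := by
  have hint : Integrable (fderiv ℝ V) μ :=
    (hV.continuous_fderiv one_ne_zero).integrable_of_hasCompactSupport (hs.fderiv ℝ)
  calc ∫ x, divergence V x ∂μ = traceCLM (∫ x, fderiv ℝ V x ∂μ) :=
        traceCLM.integral_comp_comm hint
    _ = 0 := by rw [integral_fderiv_eq_zero hV hs, map_zero]

theorem integral_divergence_sub_norm_sq_mul_sq_le {u : E → ℝ} {V : E → E} (hu : ContDiff ℝ 1 u)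
    (hs : HasCompactSupport u) (hV : ContDiff ℝ 1 V) :
    ∫ x, (divergence V x - ‖V x‖ ^ 2) * u x ^ 2 ∂μ ≤ ∫ x, ‖fderiv ℝ u x‖ ^ 2 ∂μ := by
  have hW : ContDiff ℝ 1 fun x ↦ u x ^ 2 • V x := (hu.pow 2).smul hV
  have hWs : HasCompactSupport fun x ↦ u x ^ 2 • V x :=
    (hasCompactSupport_fun_pow hs two_ne_zero).smul_right (f' := V)
  have hint_grad : Integrable (fun x ↦ ‖fderiv ℝ u x‖ ^ 2) μ :=
    ((hu.continuous_fderiv one_ne_zero).norm.pow 2).integrable_of_hasCompactSupport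
      (hasCompactSupport_fun_pow (hs.fderiv ℝ).norm two_ne_zero)
  have hint_div : Integrable (divergence fun x ↦ u x ^ 2 • V x) μ :=
    (continuous_divergence hW).integrable_of_hasCompactSupport
      ((hWs.fderiv ℝ).comp_left (g := traceCLM) (map_zero traceCLM))
  calc ∫ x, (divergence V x - ‖V x‖ ^ 2) * u x ^ 2 ∂μ
      ≤ ∫ x, ‖fderiv ℝ u x‖ ^ 2 + divergence (fun y ↦ u y ^ 2 • V y) x ∂μ :=
        integral_mono (integrable_divergence_sub_norm_sq_mul_sq hu.continuous hs hV)
          (hint_grad.add hint_div) fun x ↦ divergence_sub_norm_sq_mul_sq_le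
            (hu.differentiable one_ne_zero x) (hV.differentiable one_ne_zero x)
    _ = ∫ x, ‖fderiv ℝ u x‖ ^ 2 ∂μ := by
        rw [integral_add hint_grad hint_div, integral_divergence_eq_zero hW hWs, add_zero]

end Divergence

section Potential

variable {E : Type*} [NormedAddCommGroup E]

/-- The two-pole Hardy potential with poles `p` and `q`. At a pole it takes the junk value `0`
coming from division by zero. -/
noncomputable def bipolarPotential (p q x : E) : ℝ :=
  ‖p - q‖ ^ 2 / (‖x - p‖ ^ 2 * ‖x - q‖ ^ 2)

theorem bipolarPotential_self (p x : E) : bipolarPotential p p x = 0 := by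
  simp [bipolarPotential]

theorem bipolarPotential_comm (p q x : E) : bipolarPotential p q x = bipolarPotential q p x := by
  rw [bipolarPotential, bipolarPotential, norm_sub_rev, mul_comm]

end Potential

section SoftInversion

variable {E : Type*} [NormedAddCommGroup E] [InnerProductSpace ℝ E]

/-- The field `(x - p) / (‖x - p‖² + ε)`, which for `ε = 0` is the inversion in the unit sphere
around `p`, relative to `p`. For `ε > 0` the singularity at `p` is smoothed out. -/
noncomputable def softInversion (p : E) (ε : ℝ) (x : E) : E :=
  (‖x - p‖ ^ 2 + ε)⁻¹ • (x - p)

theorem norm_softInversion_zero_sub_sq {p q x : E} (hp : x ≠ p) (hq : x ≠ q) :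
    ‖softInversion p 0 x - softInversion q 0 x‖ ^ 2 = bipolarPotential p q x := by
  have h := dist_div_norm_sq_smul (sub_ne_zero.2 hp) (sub_ne_zero.2 hq) 1
  simp only [dist_eq_norm, sub_sub_sub_cancel_left, one_div, inv_pow, one_pow] at h
  rw [softInversion, softInversion, add_zero, add_zero, h, norm_sub_rev q p, bipolarPotential]
  ring

theorem tendsto_norm_softInversion_sub_sq {p q x : E} (hp : x ≠ p) (hq : x ≠ q) :
    Tendsto (fun ε ↦ ‖softInversion p ε x - softInversion q ε x‖ ^ 2) (𝓝 0)
      (𝓝 (bipolarPotential p q x)) := by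
  have hcont {r : E} (hr : x ≠ r) : ContinuousAt (softInversion r · x) 0 :=
    ((continuousAt_const.add continuousAt_id).inv₀
      (by simpa [sub_eq_zero] using hr)).smul continuousAt_const
  rw [← norm_softInversion_zero_sub_sq hp hq]
  exact (((hcont hp).sub (hcont hq)).norm.pow 2).tendsto

theorem contDiff_softInversion (p : E) {ε : ℝ} (hε : 0 < ε) {k : WithTop ℕ∞} :
    ContDiff ℝ k (softInversion p ε) := by
  have hsub : ContDiff ℝ k fun x : E ↦ x - p := contDiff_id.sub contDiff_const
  exact (((hsub.norm_sq ℝ).add contDiff_const).inv fun x ↦ by positivity).smul hsub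

theorem norm_softInversion_sq_le (p x : E) {ε : ℝ} (hε : 0 < ε) :
    ‖softInversion p ε x‖ ^ 2 ≤ (‖x - p‖ ^ 2 + ε)⁻¹ := by
  have hq : 0 < ‖x - p‖ ^ 2 + ε := by positivity
  calc ‖softInversion p ε x‖ ^ 2
      = (‖x - p‖ ^ 2 + ε)⁻¹ * (‖x - p‖ ^ 2 / (‖x - p‖ ^ 2 + ε)) := by
        rw [softInversion, norm_smul, Real.norm_of_nonneg (by positivity)]
        ring
    _ ≤ (‖x - p‖ ^ 2 + ε)⁻¹ :=
        mul_le_of_le_one_right (by positivity) ((div_le_one hq).2 (by linarith))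

variable [FiniteDimensional ℝ E]

theorem divergence_softInversion (p x : E) {ε : ℝ} (hε : 0 < ε) :
    divergence (softInversion p ε) x =
      finrank ℝ E * (‖x - p‖ ^ 2 + ε)⁻¹ - 2 * ‖softInversion p ε x‖ ^ 2 := by
  have hq : ‖x - p‖ ^ 2 + ε ≠ 0 := by positivity
  have hsub : HasFDerivAt (fun y ↦ y - p) (.id ℝ E) x := (hasFDerivAt_id x).sub_const p
  have hinv : HasFDerivAt (fun y ↦ (‖y - p‖ ^ 2 + ε)⁻¹)
      (-((‖x - p‖ ^ 2 + ε) ^ 2)⁻¹ • 2 • innerSL ℝ (x - p)) x :=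
    (hasDerivAt_inv hq).comp_hasFDerivAt x (hsub.norm_sq.add_const ε)
  have hdiv_sub : divergence (fun y ↦ y - p) x = finrank ℝ E := by
    rw [divergence, hsub.fderiv]
    exact LinearMap.trace_id ℝ E
  calc divergence (softInversion p ε) x
      = (‖x - p‖ ^ 2 + ε)⁻¹ * finrank ℝ E -
          2 * (((‖x - p‖ ^ 2 + ε) ^ 2)⁻¹ * inner ℝ (x - p) (x - p)) := by
        rw [← hdiv_sub]
        refine (divergence_smul hinv.differentiableAt hsub.differentiableAt).trans ?_
        rw [hinv.fderiv]
        simp only [_root_.smul_apply, innerSL_apply_apply, smul_eq_mul, nsmul_eq_mul,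
          Nat.cast_ofNat]
        ring
    _ = finrank ℝ E * (‖x - p‖ ^ 2 + ε)⁻¹ - 2 * ‖softInversion p ε x‖ ^ 2 := by
        rw [softInversion, norm_smul, mul_pow, norm_inv, inv_pow, Real.norm_eq_abs, sq_abs,
          real_inner_self_eq_norm_sq, mul_comm (finrank ℝ E : ℝ)]

theorem mul_norm_softInversion_sq_le_divergence (p x : E) {ε : ℝ} (hε : 0 < ε) :
    (finrank ℝ E - 2) * ‖softInversion p ε x‖ ^ 2 ≤ divergence (softInversion p ε) x := by
  rw [divergence_softInversion p x hε, sub_mul]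
  gcongr
  exact norm_softInversion_sq_le p x hε

end SoftInversion

section Multipolar

variable {E : Type*} [NormedAddCommGroup E] [InnerProductSpace ℝ E]
  {ι : Type*} [Fintype ι]

theorem integrable_sum_norm_softInversion_sub_sq [MeasurableSpace E] [BorelSpace E]
    {μ : Measure E} [IsFiniteMeasureOnCompacts μ] (p : ι → E) {ε : ℝ} (hε : 0 < ε) {u : E → ℝ}
    (hu : Continuous u) (hs : HasCompactSupport u) :
    Integrable (fun x ↦ (∑ i, ∑ j, ‖softInversion (p i) ε x - softInversion (p j) ε x‖ ^ 2) *
      u x ^ 2) μ := by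
  have hcont (i : ι) : Continuous (softInversion (p i) ε) :=
    (contDiff_softInversion (p i) hε (k := 0)).continuous
  have hs₂ : HasCompactSupport fun x ↦ u x ^ 2 := hasCompactSupport_fun_pow hs two_ne_zero
  exact Continuous.integrable_of_hasCompactSupport (by fun_prop) hs₂.mul_left

/-- The smoothed vector field `(n - 2) / m * ∑ i, (x - p i) / (‖x - p i‖² + ε)` with `m` poles in
dimension `n`. The factor makes `divergence V - ‖V‖ ^ 2` a multiple of the sum of the squared
differences of the summands when `ε = 0`. -/
noncomputable def multipoleField (p : ι → E) (ε : ℝ) (x : E) : E :=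
  ((finrank ℝ E - 2 : ℝ) / Fintype.card ι) • ∑ i, softInversion (p i) ε x

theorem contDiff_multipoleField (p : ι → E) {ε : ℝ} (hε : 0 < ε) {k : WithTop ℕ∞} :
    ContDiff ℝ k (multipoleField p ε) :=
  contDiff_const.smul (ContDiff.sum fun i _ ↦ contDiff_softInversion (p i) hε)

variable [FiniteDimensional ℝ E] [Nonempty ι]

theorem mul_sum_norm_sub_sq_le_divergence_multipoleField (hE : 2 ≤ finrank ℝ E) (p : ι → E)
    {ε : ℝ} (hε : 0 < ε) (x : E) :
    (finrank ℝ E - 2 : ℝ) ^ 2 / (2 * Fintype.card ι ^ 2) *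
        ∑ i, ∑ j, ‖softInversion (p i) ε x - softInversion (p j) ε x‖ ^ 2 ≤
      divergence (multipoleField p ε) x - ‖multipoleField p ε x‖ ^ 2 := by
  set c : ℝ := (finrank ℝ E - 2) / Fintype.card ι with hc_def
  have hE' : (0 : ℝ) ≤ finrank ℝ E - 2 := sub_nonneg.2 (by exact_mod_cast hE)
  have : 0 ≤ c := by positivity
  have hcard : c * Fintype.card ι = finrank ℝ E - 2 := div_mul_cancel₀ _ (by simp)
  have hdiv : divergence (multipoleField p ε) x =
      c * ∑ i, divergence (softInversion (p i) ε) x := by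
    rw [← divergence_sum fun i _ ↦
      (contDiff_softInversion (p i) hε (k := 1)).differentiable one_ne_zero x]
    exact divergence_const_smul c _ x
  calc (finrank ℝ E - 2 : ℝ) ^ 2 / (2 * Fintype.card ι ^ 2) *
        ∑ i, ∑ j, ‖softInversion (p i) ε x - softInversion (p j) ε x‖ ^ 2
      = c * ∑ i, (c * Fintype.card ι) * ‖softInversion (p i) ε x‖ ^ 2 -
          c ^ 2 * ‖∑ i, softInversion (p i) ε x‖ ^ 2 := by
        rw [sum_sum_norm_sub_sq, ← mul_sum, hc_def]
        ring
    _ ≤ c * ∑ i, divergence (softInversion (p i) ε) x -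
          c ^ 2 * ‖∑ i, softInversion (p i) ε x‖ ^ 2 := by
        rw [hcard]
        gcongr
        exact mul_norm_softInversion_sq_le_divergence _ x hε
    _ = divergence (multipoleField p ε) x - ‖multipoleField p ε x‖ ^ 2 := by
        rw [hdiv, multipoleField, norm_smul, mul_pow, Real.norm_eq_abs, sq_abs]

variable [MeasurableSpace E] [BorelSpace E] {μ : Measure E} [IsAddHaarMeasure μ]

theorem mul_integral_sum_norm_softInversion_sub_sq_le (hE : 2 ≤ finrank ℝ E) (p : ι → E) {ε : ℝ}
    (hε : 0 < ε) {u : E → ℝ} (hu : ContDiff ℝ 1 u) (hs : HasCompactSupport u) :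
    (finrank ℝ E - 2 : ℝ) ^ 2 / (2 * Fintype.card ι ^ 2) *
        ∫ x, (∑ i, ∑ j, ‖softInversion (p i) ε x - softInversion (p j) ε x‖ ^ 2) * u x ^ 2 ∂μ ≤
      ∫ x, ‖fderiv ℝ u x‖ ^ 2 ∂μ := by
  have hV : ContDiff ℝ 1 (multipoleField p ε) := contDiff_multipoleField p hε
  refine le_trans ?_ (integral_divergence_sub_norm_sq_mul_sq_le hu hs hV)
  rw [← integral_const_mul]
  refine integral_mono
    ((integrable_sum_norm_softInversion_sub_sq p hε hu.continuous hs).const_mul _)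
    (integrable_divergence_sub_norm_sq_mul_sq hu.continuous hs hV) fun x ↦ ?_
  simp only [← mul_assoc]
  gcongr
  exact mul_sum_norm_sub_sq_le_divergence_multipoleField hE p hε x

theorem integrable_and_integral_sum_bipolarPotential_le (hE : 2 < finrank ℝ E) (p : ι → E)
    {u : E → ℝ} (hu : ContDiff ℝ 1 u) (hs : HasCompactSupport u) :
    Integrable (fun x ↦ (∑ i, ∑ j, bipolarPotential (p i) (p j) x) * u x ^ 2) μ ∧
      (finrank ℝ E - 2 : ℝ) ^ 2 / (2 * Fintype.card ι ^ 2) *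
          ∫ x, (∑ i, ∑ j, bipolarPotential (p i) (p j) x) * u x ^ 2 ∂μ ≤
        ∫ x, ‖fderiv ℝ u x‖ ^ 2 ∂μ := by
  have hE' : (0 : ℝ) < finrank ℝ E - 2 := sub_pos.2 (by exact_mod_cast hE)
  have : Nontrivial E := nontrivial_of_finrank_pos (R := ℝ) (by lia)
  obtain ⟨ε, -, hε, hε_lim⟩ := exists_seq_strictAnti_tendsto (0 : ℝ)
  rw [← le_div_iff₀' (by positivity)]
  refine integrable_and_integral_le_of_tendsto_ae
    (fun k ↦ integrable_sum_norm_softInversion_sub_sq p (hε k) hu.continuous hs)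
    (fun k ↦ .of_forall fun x ↦ by positivity)
    (fun k ↦ (le_div_iff₀' (by positivity)).2
      (mul_integral_sum_norm_softInversion_sub_sq_le hE.le p (hε k) hu hs)) ?_
  filter_upwards [ae_all_iff.2 fun i ↦ ae_ne μ (p i)] with x hx
  exact .mul_const _ <| tendsto_finsetSum _ fun i _ ↦ tendsto_finsetSum _ fun j _ ↦
    (tendsto_norm_softInversion_sub_sq (hx i) (hx j)).comp hε_lim

theorem integrable_bipolarPotential_mul_sq (hE : 2 < finrank ℝ E) (p q : E) {u : E → ℝ}
    (hu : ContDiff ℝ 1 u) (hs : HasCompactSupport u) :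
    Integrable (fun x ↦ bipolarPotential p q x * u x ^ 2) μ := by
  have h := (integrable_and_integral_sum_bipolarPotential_le (μ := μ) hE ![p, q] hu hs).1
  refine (h.div_const 2).congr (.of_forall fun x ↦ ?_)
  simp only [Fin.sum_univ_two, Matrix.cons_val_zero, Matrix.cons_val_one, bipolarPotential_self,
    bipolarPotential_comm q p]
  ring

theorem multipolar_hardy_distance_form_general [LinearOrder ι] (hE : 2 < finrank ℝ E) (p : ι → E)
    {u : E → ℝ} (hu : ContDiff ℝ 1 u) (hs : HasCompactSupport u) :
    (finrank ℝ E - 2 : ℝ) ^ 2 / Fintype.card ι ^ 2 *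
        ∑ i, ∑ j, (if i < j then ∫ x, bipolarPotential (p i) (p j) x * u x ^ 2 ∂μ else 0) ≤
      ∫ x, ‖fderiv ℝ u x‖ ^ 2 ∂μ := by
  have hint (i j : ι) := integrable_bipolarPotential_mul_sq (μ := μ) hE (p i) (p j) hu hs
  have hsum : ∫ x, (∑ i, ∑ j, bipolarPotential (p i) (p j) x) * u x ^ 2 ∂μ =
      2 * ∑ i, ∑ j, if i < j then ∫ x, bipolarPotential (p i) (p j) x * u x ^ 2 ∂μ else 0 := by
    simp only [sum_mul]
    rw [integral_finsetSum _ fun i _ ↦ integrable_finsetSum _ fun j _ ↦ hint i j]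
    simp only [integral_finsetSum _ fun j _ ↦ hint _ j]
    rw [sum_sum_eq_two_nsmul_sum_sum_lt, nsmul_eq_mul, Nat.cast_ofNat]
    · exact fun i j ↦ by simp only [bipolarPotential_comm (p i)]
    · simp [bipolarPotential_self]
  convert (integrable_and_integral_sum_bipolarPotential_le (μ := μ) hE p hu hs).2 using 1
  rw [hsum]
  ring

end Multipolar

theorem multipolar_hardy_distance_form (n m : ℕ) (hn : 3 ≤ n) (hm : 2 ≤ m)
    (p : Fin m → EuclideanSpace ℝ (Fin n)) (hp : Function.Injective p)
    (u : EuclideanSpace ℝ (Fin n) → ℝ)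
    (hu : ContDiff ℝ (⊤ : ℕ∞) u) (hsupp : HasCompactSupport u) :
    ∫ x, ‖gradient u x‖ ^ 2 ≥
      ((n : ℝ) - 2) ^ 2 / m ^ 2 *
        ∑ i : Fin m, ∑ j : Fin m, if i < j then
          ∫ x, ‖p i - p j‖ ^ 2 / (‖x - p i‖ ^ 2 * ‖x - p j‖ ^ 2) * u x ^ 2 else 0 := by
  have : Nonempty (Fin m) := ⟨⟨0, by lia⟩⟩
  simpa [gradient, bipolarPotential] using multipolar_hardy_distance_form_general (μ := volume)
    (by simpa [Nat.lt_iff_add_one_le] using hn) p (hu.of_le (by exact_mod_cast le_top)) hsupp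
end
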